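/- arXiv:1908.03542 — 5 statements merged into one kernel-verified Lean document; each statement's English description precedes it below -/
import Mathlib

section
/- Let D be a Cantor space equipped with a metric d compatible with its topology, and let C ⊆ D be a proper closed subset which is itself a Cantor space in the subspace topology and is entwined in D (i.e. C has empty interior in D). Suppose C = C₀ ∪ C₁ where C₀, C₁ are disjoint, nonempty, and clopen in C, and let ε > 0. Then there exist subsets D₀, D₁ ⊆ D, clopen in D, such that: (1) Dᵢ ∩ C = Cᵢ for i = 0,1; (2) D₀ ∩ D₁ = ∅; (3) D₀ ∪ D₁ ≠ D; (4) Dᵢ is contained in the open ε-neighborhood of Cᵢ (with respect to d); and (5) each Cᵢ and each Dᵢ is a Cantor space in the subspace topology, Cᵢ is a proper subset of Dᵢ, and Cᵢ has empty interior in Dᵢ. -/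
open Set Metric Filter Topology

/-- A Cantor space: nonempty, compact, metrizable, totally disconnected, perfect
(no isolated points). -/
def IsCantorSpace (X : Type*) [TopologicalSpace X] : Prop :=
  Nonempty X ∧ CompactSpace X ∧ TopologicalSpace.MetrizableSpace X ∧
    TotallyDisconnectedSpace X ∧ ∀ x : X, Filter.NeBot (nhdsWithin x {x}ᶜ)

theorem isCantorSpace_coe_iff {X : Type*} [MetricSpace X] [CompactSpace X]
    [TotallyDisconnectedSpace X] {S : Set X} (hS : IsClosed S) :
    IsCantorSpace ↥S ↔ S.Nonempty ∧ Preperfect S := by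
  have hperfect : (∀ x : S, (𝓝[≠] x).NeBot) ↔ Preperfect S := by
    simp only [nhds_ne_subtype_neBot_iff, Subtype.forall]
    rfl
  rw [IsCantorSpace, hperfect, nonempty_coe_sort]
  exact ⟨fun h => ⟨h.1, h.2.2.2.2⟩, fun h => ⟨h.1, isCompact_iff_compactSpace.mp hS.isCompact,
    inferInstance, inferInstance, h.2⟩⟩

theorem IsClosed.of_isClosed_preimage_coe {X : Type*} [TopologicalSpace X] {S T : Set X}
    (hT : IsClosed T) (hST : S ⊆ T) (hS : IsClosed (Subtype.val ⁻¹' S : Set ↥T)) :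
    IsClosed S := by
  simpa [Subtype.image_preimage_coe, inter_eq_right.mpr hST]
    using hT.isClosedEmbedding_subtypeVal.isClosedMap _ hS

theorem Preperfect.of_isOpen_preimage_coe {X : Type*} [TopologicalSpace X] {S T : Set X}
    (hT : Preperfect T) (hST : S ⊆ T) (hS : IsOpen (Subtype.val ⁻¹' S : Set ↥T)) :
    Preperfect S := by
  obtain ⟨U, hU, hUS⟩ := isOpen_induced_iff.mp hS
  have hUT : U ∩ T = S := by
    rw [inter_comm, Subtype.preimage_coe_eq_preimage_coe_iff.mp hUS, inter_eq_right.mpr hST]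
  exact hUT ▸ hT.open_inter hU

theorem IsOpen.interior_preimage_coe_eq_empty {X : Type*} [TopologicalSpace X] {S U : Set X}
    (hU : IsOpen U) (hS : interior S = ∅) : interior (Subtype.val ⁻¹' S : Set ↥U) = ∅ := by
  rw [← hU.isOpenMap_subtype_val.preimage_interior_eq_interior_preimage continuous_subtype_val,
    hS, preimage_empty]

theorem IsOpen.ssubset_of_interior_eq_empty {X : Type*} [TopologicalSpace X] {S U : Set X}
    (hU : IsOpen U) (hne : U.Nonempty) (hSU : S ⊆ U) (hS : interior S = ∅) : S ⊂ U := by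
  refine hSU.ssubset_of_ne ?_
  rintro rfl
  exact hne.ne_empty (hU.interior_eq.symm.trans hS)

theorem stmt0 {D : Type*} [MetricSpace D] (hD : IsCantorSpace D)
    (C : Set D) (hCclosed : IsClosed C) (hCproper : C ≠ Set.univ)
    (hCcantor : IsCantorSpace ↥C) (hCentwined : interior C = ∅)
    (C₀ C₁ : Set D) (hCunion : C₀ ∪ C₁ = C) (hCdisj : Disjoint C₀ C₁)
    (hC₀ne : C₀.Nonempty) (hC₁ne : C₁.Nonempty)
    (hC₀clopen : IsClopen (Subtype.val ⁻¹' C₀ : Set ↥C))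
    (hC₁clopen : IsClopen (Subtype.val ⁻¹' C₁ : Set ↥C))
    (ε : ℝ) (hε : 0 < ε) :
    ∃ D₀ D₁ : Set D,
      IsClopen D₀ ∧ IsClopen D₁ ∧
      D₀ ∩ C = C₀ ∧ D₁ ∩ C = C₁ ∧
      Disjoint D₀ D₁ ∧
      D₀ ∪ D₁ ≠ Set.univ ∧
      D₀ ⊆ Metric.thickening ε C₀ ∧ D₁ ⊆ Metric.thickening ε C₁ ∧
      IsCantorSpace ↥C₀ ∧ IsCantorSpace ↥C₁ ∧
      IsCantorSpace ↥D₀ ∧ IsCantorSpace ↥D₁ ∧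
      C₀ ⊂ D₀ ∧ C₁ ⊂ D₁ ∧
      interior (Subtype.val ⁻¹' C₀ : Set ↥D₀) = ∅ ∧
      interior (Subtype.val ⁻¹' C₁ : Set ↥D₁) = ∅ := by
  obtain ⟨-, _, -, _, hDperfect⟩ := hD
  have : PerfectSpace D := perfectSpace_iff_forall_not_isolated.mpr hDperfect
  have hCperfect : Preperfect C := ((isCantorSpace_coe_iff hCclosed).mp hCcantor).2
  have hC₀C : C₀ ⊆ C := hCunion ▸ subset_union_left
  have hC₁C : C₁ ⊆ C := hCunion ▸ subset_union_right
  have hC₀closed : IsClosed C₀ := hCclosed.of_isClosed_preimage_coe hC₀C hC₀clopen.isClosed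
  have hC₁closed : IsClosed C₁ := hCclosed.of_isClosed_preimage_coe hC₁C hC₁clopen.isClosed
  have hC₀int : interior C₀ = ∅ := subset_empty_iff.mp (hCentwined ▸ interior_mono hC₀C)
  have hC₁int : interior C₁ = ∅ := subset_empty_iff.mp (hCentwined ▸ interior_mono hC₁C)
  obtain ⟨p, hp⟩ := (ne_univ_iff_exists_notMem C).mp hCproper
  obtain ⟨D₀, hD₀, hC₀D₀, hD₀sub⟩ := exists_clopen_of_closed_subset_open hC₀closed
    ((isOpen_thickening (δ := ε) (E := C₀)).sdiff (hC₁closed.union (isClosed_singleton (x := p))))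
    (fun x hx => ⟨self_subset_thickening hε C₀ hx, by
      rintro (h | rfl)
      · exact disjoint_left.mp hCdisj hx h
      · exact hp (hC₀C hx)⟩)
  obtain ⟨D₁, hD₁, hC₁D₁, hD₁sub⟩ := exists_clopen_of_closed_subset_open hC₁closed
    ((isOpen_thickening (δ := ε) (E := C₁)).sdiff (hD₀.isClosed.union (isClosed_singleton (x := p))))
    (fun x hx => ⟨self_subset_thickening hε C₁ hx, by
      rintro (h | rfl)
      · exact (hD₀sub h).2 (Or.inl hx)
      · exact hp (hC₁C hx)⟩)
  have hdisj : Disjoint D₀ D₁ := disjoint_right.mpr fun x hx h => (hD₁sub hx).2 (Or.inl h)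
  refine ⟨D₀, D₁, hD₀, hD₁, ?_, ?_, hdisj, ?_, fun x hx => (hD₀sub hx).1,
    fun x hx => (hD₁sub hx).1,
    (isCantorSpace_coe_iff hC₀closed).mpr
      ⟨hC₀ne, hCperfect.of_isOpen_preimage_coe hC₀C hC₀clopen.isOpen⟩,
    (isCantorSpace_coe_iff hC₁closed).mpr
      ⟨hC₁ne, hCperfect.of_isOpen_preimage_coe hC₁C hC₁clopen.isOpen⟩,
    (isCantorSpace_coe_iff hD₀.isClosed).mpr ⟨hC₀ne.mono hC₀D₀, hD₀.isOpen.preperfect⟩,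
    (isCantorSpace_coe_iff hD₁.isClosed).mpr ⟨hC₁ne.mono hC₁D₁, hD₁.isOpen.preperfect⟩,
    hD₀.isOpen.ssubset_of_interior_eq_empty (hC₀ne.mono hC₀D₀) hC₀D₀ hC₀int,
    hD₁.isOpen.ssubset_of_interior_eq_empty (hC₁ne.mono hC₁D₁) hC₁D₁ hC₁int,
    hD₀.isOpen.interior_preimage_coe_eq_empty hC₀int,
    hD₁.isOpen.interior_preimage_coe_eq_empty hC₁int⟩
  · rw [← hCunion, inter_union_distrib_left, inter_eq_right.mpr hC₀D₀,
      (hdisj.mono_right hC₁D₁).inter_eq, union_empty]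
  · rw [← hCunion, inter_union_distrib_left, inter_eq_right.mpr hC₁D₁,
      (hdisj.symm.mono_right hC₀D₀).inter_eq, empty_union]
  · refine (ne_univ_iff_exists_notMem _).mpr ⟨p, ?_⟩
    rintro (h | h)
    · exact (hD₀sub h).2 (Or.inr rfl)
    · exact (hD₁sub h).2 (Or.inr rfl)
end

section
/- Let D and D′ be Cantor spaces, let C ⊆ D be a proper closed subset which is a Cantor space in the subspace topology and is entwined in D (i.e. has empty interior in D), and let C′ ⊆ D′ be a proper closed subset which is a Cantor space in the subspace topology and is entwined in D′. Then every homeomorphism φ : C → C′ extends to a homeomorphism ψ : D → D′ (i.e. ψ restricted to C equals φ). -/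
open Set Filter Topology

/-- A nonempty fibre of a continuous colouring contains two distinct points off any closed set with
empty interior. -/
theorem exists_ne_notMem_of_mem_range {Y : Type*} [TopologicalSpace Y]
    [∀ y : Y, NeBot (𝓝[≠] y)] {C' : Set Y} (hC' : IsClosed C') (hint : interior C' = ∅)
    {g : Y → ℕ} (hg : Continuous g) {i : ℕ} (hi : i ∈ range g) :
    ∃ a b : Y, g a = i ∧ g b = i ∧ a ∉ C' ∧ b ∉ C' ∧ a ≠ b := by
  obtain ⟨y, hy⟩ := hi
  have hopen : IsOpen (g ⁻¹' {i}) := (isOpen_discrete _).preimage hg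
  obtain ⟨a, haC, ha⟩ : ∃ a ∈ C'ᶜ, a ∈ g ⁻¹' {i} :=
    (interior_eq_empty_iff_dense_compl.1 hint).exists_mem_open hopen ⟨y, hy⟩
  have hmem : g ⁻¹' {i} ∩ C'ᶜ ∈ 𝓝 a := (hopen.inter hC'.isOpen_compl).mem_nhds ⟨ha, haC⟩
  obtain ⟨b, ⟨hb, hbC⟩, hne⟩ :=
    ((eventually_nhdsWithin_of_eventually_nhds hmem).and
      (self_mem_nhdsWithin (a := a) (s := {a}ᶜ))).exists
  exact ⟨a, b, ha, hb, haC, hbC, Ne.symm hne⟩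

/-- Continuous colourings `f` of `X` and `g` of `Y` by natural numbers that use the same colours
and correspond to each other under a homeomorphism `φ` between subspaces. -/
structure CompatibleColorings {X Y : Type*} [TopologicalSpace X] [TopologicalSpace Y]
    {C : Set X} {C' : Set Y} (φ : C ≃ₜ C') (f : X → ℕ) (g : Y → ℕ) : Prop where
  continuous_left : Continuous f
  continuous_right : Continuous g
  range_eq : range f = range g
  eq_on : ∀ x : C, f x = g (φ x)

namespace CompatibleColorings

variable {X Y : Type*} [TopologicalSpace X] [TopologicalSpace Y]
  {C : Set X} {C' : Set Y} {φ : C ≃ₜ C'} {f : X → ℕ} {g : Y → ℕ}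

theorem symm (h : CompatibleColorings φ f g) : CompatibleColorings φ.symm g f :=
  ⟨h.continuous_right, h.continuous_left, h.range_eq.symm, fun y => by
    simpa using (h.eq_on (φ.symm y)).symm⟩

/-- A two-valued continuous function on `X` can be matched on `Y`, relative to compatible
colourings. -/
theorem exists_bool_extension [CompactSpace Y] [T2Space Y] [TotallyDisconnectedSpace Y]
    [∀ y : Y, NeBot (𝓝[≠] y)] (hC' : IsClosed C') (hint : interior C' = ∅)
    (hfg : CompatibleColorings φ f g) {h : X → Bool} (hh : Continuous h) :
    ∃ k : Y → Bool, Continuous k ∧ (∀ x : C, h x = k (φ x)) ∧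
      range (fun x => (f x, h x)) = range (fun y => (g y, k y)) := by
  classical
  have hfin : Finite (range g) := (isCompact_range hfg.continuous_right).finite_of_discrete
  choose a b hga hgb haC hbC hab using fun i : range g =>
    exists_ne_notMem_of_mem_range hC' hint hfg.continuous_right i.2
  let S : Bool → Set Y := fun c => Subtype.val '' {y : C' | h (φ.symm y) = c}
  have hS : ∀ c, IsClosed (S c) := fun c => by
    refine hC'.isClosedEmbedding_subtypeVal.isClosedMap _ ?_
    exact (isClosed_discrete {c}).preimage
      (hh.comp (continuous_subtype_val.comp φ.symm.continuous))
  have hdisj : S true ∪ range a ⊆ (S false ∪ range b)ᶜ := by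
    rintro y hy (hy' | hy')
    · rcases hy with hy | ⟨i, rfl⟩
      · obtain ⟨u, hu, rfl⟩ := hy
        obtain ⟨v, hv, huv⟩ := hy'
        obtain rfl := Subtype.ext huv
        simp_all
      · obtain ⟨v, -, hv⟩ := hy'
        exact haC i (hv ▸ v.2)
    · obtain ⟨j, rfl⟩ := hy'
      rcases hy with ⟨v, -, hv⟩ | ⟨i, hi⟩
      · exact hbC j (hv ▸ v.2)
      · have hij : i = j := Subtype.ext (by rw [← hga i, ← hgb j, hi])
        exact hab j (hij ▸ hi)
  obtain ⟨P, hP, hPt, hPf⟩ := exists_clopen_of_closed_subset_open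
    ((hS true).union (finite_range a).isClosed)
    ((hS false).union (finite_range b).isClosed).isOpen_compl hdisj
  let adjust : ℕ × Bool → Bool :=
    fun p => if p ∈ range (fun x => (f x, h x)) then p.2 else !p.2
  let k : Y → Bool := fun y => adjust (g y, P.boolIndicator y)
  have hk : ∀ y, (g y, P.boolIndicator y) ∈ range (fun x => (f x, h x)) →
      k y = P.boolIndicator y := fun y hy => if_pos hy
  refine ⟨k, ?_, fun x => ?_, ?_⟩
  · exact (continuous_of_discreteTopology (f := adjust)).comp
      (hfg.continuous_right.prodMk ((continuous_boolIndicator_iff_isClopen P).2 hP))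
  · have hx : P.boolIndicator (φ x) = h x := by
      have hmem : (φ x : Y) ∈ S (h x) := ⟨φ x, by simp, rfl⟩
      cases hc : h x with
      | true => exact (P.mem_iff_boolIndicator _).1 (hPt (Or.inl (hc ▸ hmem)))
      | false =>
        exact (P.notMem_iff_boolIndicator _).1 fun hp => hPf hp (Or.inl (hc ▸ hmem))
    rw [hk _ ⟨x, by simp [hx, hfg.eq_on x]⟩, hx]
  · ext ⟨i, c⟩
    constructor
    · rintro ⟨x, hx⟩
      obtain ⟨rfl, rfl⟩ := Prod.mk.inj hx
      have hi : f x ∈ range g := hfg.range_eq ▸ mem_range_self x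
      obtain ⟨y, hgy, hy⟩ : ∃ y, g y = f x ∧ P.boolIndicator y = h x := by
        cases h x with
        | true =>
          exact ⟨a ⟨_, hi⟩, hga _, (P.mem_iff_boolIndicator _).1 (hPt (Or.inr ⟨_, rfl⟩))⟩
        | false =>
          exact ⟨b ⟨_, hi⟩, hgb _,
            (P.notMem_iff_boolIndicator _).1 fun hp => hPf hp (Or.inr ⟨_, rfl⟩)⟩
      exact ⟨y, by simp [hk y ⟨x, by simp [hgy, hy]⟩, hgy, hy]⟩
    · rintro ⟨y, hy⟩
      obtain ⟨rfl, rfl⟩ := Prod.mk.inj hy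
      by_cases hmem : (g y, P.boolIndicator y) ∈ range (fun x => (f x, h x))
      · rwa [hk y hmem]
      · obtain ⟨x, hx⟩ : g y ∈ range f := hfg.range_eq ▸ mem_range_self y
        have hky : k y = !P.boolIndicator y := if_neg hmem
        refine ⟨x, Prod.ext hx ?_⟩
        have hne : h x ≠ P.boolIndicator y := fun he => hmem ⟨x, Prod.ext hx he⟩
        rw [hky]
        exact Bool.eq_not_of_ne hne

/-- Compatible colourings can be refined so that the left one decides a given clopen set. -/
theorem exists_refinement_left [CompactSpace Y] [T2Space Y] [TotallyDisconnectedSpace Y]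
    [∀ y : Y, NeBot (𝓝[≠] y)] (hC' : IsClosed C') (hint : interior C' = ∅)
    (hfg : CompatibleColorings φ f g) {U : Set X} (hU : IsClopen U) :
    ∃ f' g', CompatibleColorings φ f' g' ∧ (∃ r : ℕ → ℕ, f = r ∘ f' ∧ g = r ∘ g') ∧
      ∃ p : Set ℕ, U = f' ⁻¹' p := by
  obtain ⟨k, hk, hφ, hrange⟩ := hfg.exists_bool_extension hC' hint
    ((continuous_boolIndicator_iff_isClopen U).2 hU)
  let e : ℕ × Bool → ℕ := fun p => Nat.bit p.2 p.1
  have he : Continuous e := continuous_of_discreteTopology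
  refine ⟨fun x => e (f x, U.boolIndicator x), fun y => e (g y, k y), ⟨?_, ?_, ?_, ?_⟩,
    ⟨Nat.div2, ?_, ?_⟩, {n | n.bodd = true}, ?_⟩
  · exact he.comp
      (hfg.continuous_left.prodMk ((continuous_boolIndicator_iff_isClopen U).2 hU))
  · exact he.comp (hfg.continuous_right.prodMk hk)
  · rw [range_comp' e, range_comp' e, hrange]
  · intro x
    simp only [hφ x, hfg.eq_on x]
  · ext x
    simp [e, Nat.div2_bit]
  · ext y
    simp [e, Nat.div2_bit]
  · ext x
    simp [e, Nat.bodd_bit, U.mem_iff_boolIndicator]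

/-- Compatible colourings can be refined so that each decides a given clopen set. -/
theorem exists_refinement
    [CompactSpace X] [T2Space X] [TotallyDisconnectedSpace X] [∀ x : X, NeBot (𝓝[≠] x)]
    [CompactSpace Y] [T2Space Y] [TotallyDisconnectedSpace Y] [∀ y : Y, NeBot (𝓝[≠] y)]
    (hC : IsClosed C) (hCint : interior C = ∅) (hC' : IsClosed C') (hCint' : interior C' = ∅)
    (hfg : CompatibleColorings φ f g) {U : Set X} (hU : IsClopen U) {V : Set Y}
    (hV : IsClopen V) :
    ∃ f' g', CompatibleColorings φ f' g' ∧ (∃ r : ℕ → ℕ, f = r ∘ f' ∧ g = r ∘ g') ∧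
      (∃ p : Set ℕ, U = f' ⁻¹' p) ∧ ∃ q : Set ℕ, V = g' ⁻¹' q := by
  obtain ⟨f₁, g₁, h₁, ⟨r, rfl, rfl⟩, p, rfl⟩ := hfg.exists_refinement_left hC' hCint' hU
  obtain ⟨g₂, f₂, h₂, ⟨s, rfl, rfl⟩, q, rfl⟩ := h₁.symm.exists_refinement_left hC hCint hV
  exact ⟨f₂, g₂, h₂.symm, ⟨r ∘ s, rfl, rfl⟩, ⟨s ⁻¹' p, rfl⟩, q, rfl⟩

/-- Given a coherent sequence of compatible colourings, each point of `X` has the same colours as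
some point of `Y`. -/
theorem exists_forall_eq [CompactSpace Y] {F : ℕ → X → ℕ} {G : ℕ → Y → ℕ}
    (h : ∀ n, CompatibleColorings φ (F n) (G n))
    (href : ∀ n, ∃ r : ℕ → ℕ, F n = r ∘ F (n + 1) ∧ G n = r ∘ G (n + 1)) (x : X) :
    ∃ y, ∀ n, F n x = G n y := by
  have hclosed : ∀ n, IsClosed (G n ⁻¹' {F n x}) := fun n =>
    (isClosed_discrete _).preimage (h n).continuous_right
  obtain ⟨y, hy⟩ := IsCompact.nonempty_iInter_of_sequence_nonempty_isCompact_isClosed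
    (fun n => G n ⁻¹' {F n x}) (fun n y hy => by
      obtain ⟨r, hF, hG⟩ := href n
      have hy' : G (n + 1) y = F (n + 1) x := hy
      simp [hF, hG, hy'])
    (fun n => by
      obtain ⟨y, hy⟩ : F n x ∈ range (G n) := (h n).range_eq ▸ mem_range_self x
      exact ⟨y, hy⟩)
    (hclosed 0).isCompact hclosed
  exact ⟨y, fun n => (mem_iInter.1 hy n).symm⟩

end CompatibleColorings

/-- Distinct points are distinguished by a sequence of functions that decides every clopen set. -/
theorem eq_of_forall_eq_of_clopens {X : Type*} [TopologicalSpace X] [TotallySeparatedSpace X]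
    {F : ℕ → X → ℕ}
    (hF : ∀ U : TopologicalSpace.Clopens X, ∃ n, ∃ p : Set ℕ, (U : Set X) = F n ⁻¹' p)
    {x x' : X} (h : ∀ n, F n x = F n x') : x = x' := by
  by_contra hne
  obtain ⟨U, hU, hx, hx'⟩ := exists_isClopen_of_totally_separated hne
  obtain ⟨n, p, hp⟩ := hF ⟨U, hU⟩
  change U = F n ⁻¹' p at hp
  subst hp
  exact hx' (by simpa [← h n] using hx)

theorem stmt1 {D D' : Type*} [TopologicalSpace D] [TopologicalSpace D']
    (hD : IsCantorSpace D) (hD' : IsCantorSpace D')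
    (C : Set D) (hCclosed : IsClosed C) (hCproper : C ≠ Set.univ)
    (hCcantor : IsCantorSpace ↥C) (hCentwined : interior C = ∅)
    (C' : Set D') (hC'closed : IsClosed C') (hC'proper : C' ≠ Set.univ)
    (hC'cantor : IsCantorSpace ↥C') (hC'entwined : interior C' = ∅)
    (φ : ↥C ≃ₜ ↥C') :
    ∃ ψ : D ≃ₜ D', ∀ x : ↥C, ψ ↑x = ↑(φ x) := by
  obtain ⟨_, _, _, _, _⟩ := hD
  obtain ⟨_, _, _, _, _⟩ := hD'
  have : SecondCountableTopology D := by
    let := TopologicalSpace.metrizableSpaceMetric D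
    infer_instance
  have : SecondCountableTopology D' := by
    let := TopologicalSpace.metrizableSpaceMetric D'
    infer_instance
  have := TopologicalSpace.Clopens.countable_iff_secondCountable.2 ‹SecondCountableTopology D›
  have := TopologicalSpace.Clopens.countable_iff_secondCountable.2 ‹SecondCountableTopology D'›
  have : TotallySeparatedSpace D := loc_compact_t2_tot_disc_iff_tot_sep.1 inferInstance
  have : TotallySeparatedSpace D' := loc_compact_t2_tot_disc_iff_tot_sep.1 inferInstance
  obtain ⟨u, hu⟩ := exists_surjective_nat (TopologicalSpace.Clopens D)
  obtain ⟨v, hv⟩ := exists_surjective_nat (TopologicalSpace.Clopens D')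
  choose nextF nextG hnext href hdecF hdecG using
    fun (n : ℕ) (s : {s : (D → ℕ) × (D' → ℕ) // CompatibleColorings φ s.1 s.2}) =>
      s.2.exists_refinement hCclosed hCentwined hC'closed hC'entwined (u n).isClopen (v n).isClopen
  let s : ℕ → {s : (D → ℕ) × (D' → ℕ) // CompatibleColorings φ s.1 s.2} := fun n =>
    Nat.rec ⟨(fun _ => 0, fun _ => 0), continuous_const, continuous_const, by simp, fun _ => rfl⟩
      (fun n s => ⟨(nextF n s, nextG n s), hnext n s⟩) n
  let F : ℕ → D → ℕ := fun n => (s n).1.1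
  let G : ℕ → D' → ℕ := fun n => (s n).1.2
  have hcompat : ∀ n, CompatibleColorings φ (F n) (G n) := fun n => (s n).2
  have hFG : ∀ n, ∃ r : ℕ → ℕ, F n = r ∘ F (n + 1) ∧ G n = r ∘ G (n + 1) :=
    fun n => href n (s n)
  have hF : ∀ {x x'}, (∀ n, F n x = F n x') → x = x' :=
    eq_of_forall_eq_of_clopens fun U => by
      obtain ⟨n, rfl⟩ := hu U
      exact ⟨n + 1, hdecF n (s n)⟩
  have hG : ∀ {y y'}, (∀ n, G n y = G n y') → y = y' :=
    eq_of_forall_eq_of_clopens fun V => by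
      obtain ⟨n, rfl⟩ := hv V
      exact ⟨n + 1, hdecG n (s n)⟩
  choose ψ hψ using CompatibleColorings.exists_forall_eq hcompat hFG
  choose χ hχ using CompatibleColorings.exists_forall_eq (fun n => (hcompat n).symm)
    (fun n => (hFG n).imp fun _ => And.symm)
  have hcont : Continuous ψ := by
    have hind : Topology.IsInducing (fun y n => G n y) :=
      (Continuous.isClosedEmbedding (continuous_pi fun n => (hcompat n).continuous_right)
        fun y y' h => hG (congrFun h)).isInducing
    refine hind.continuous_iff.2 (continuous_pi fun n => ?_)
    exact (hcompat n).continuous_left.congr fun x => hψ x n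
  let e : D ≃ D' :=
    { toFun := ψ
      invFun := χ
      left_inv := fun x => hF fun n => by rw [← hχ, ← hψ]
      right_inv := fun y => hG fun n => by rw [← hψ, ← hχ] }
  exact ⟨Continuous.homeoOfEquivCompactToT2 (f := e) hcont,
    fun x => hG fun n => (hψ x n).symm.trans ((hcompat n).eq_on x)⟩
end

section
/- Any two ω-Cantor spaces are homeomorphic. That is, if X with exhaustion X₁ ⊆ X₂ ⊆ ⋯ and X′ with exhaustion X′₁ ⊆ X′₂ ⊆ ⋯ are both ω-Cantor spaces, then there is a homeomorphism X → X′. -/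
open Set Filter Topology

/-- An ω-Cantor space structure on `X` with exhaustion `Xn`: the `Xn` are increasing with
union `X`, `X` carries the direct limit topology, each `Xn` is a Cantor space in the subspace
topology, and each `Xn` is entwined in `Xn₊₁` (a proper subset with empty interior there). -/
def IsOmegaCantor (X : Type*) [TopologicalSpace X] (Xn : ℕ → Set X) : Prop :=
  Monotone Xn ∧ (⋃ n, Xn n) = Set.univ ∧
  (∀ U : Set X, IsOpen U ↔ ∀ n, IsOpen (Subtype.val ⁻¹' U : Set ↥(Xn n))) ∧
  (∀ n, IsCantorSpace ↥(Xn n)) ∧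
  (∀ n, Xn n ⊂ Xn (n + 1)) ∧
  (∀ n, interior (Subtype.val ⁻¹' (Xn n) : Set ↥(Xn (n + 1))) = ∅)

section BackAndForth

variable {Z D D' S : Type*} [TopologicalSpace D] [TopologicalSpace D']

/-- Two locally constant labellings of `D` and `D'` are matched along `i : Z → D` and
`j : Z → D'` if they use the same labels and agree on the image of `Z`. -/
structure MatchedLabels (i : Z → D) (j : Z → D') (a : D → S) (b : D' → S) : Prop where
  left : IsLocallyConstant a
  right : IsLocallyConstant b
  range_eq : range a = range b
  agree : ∀ z, a (i z) = b (j z)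

theorem MatchedLabels.symm {i : Z → D} {j : Z → D'} {a : D → S} {b : D' → S}
    (h : MatchedLabels i j a b) : MatchedLabels j i b a :=
  ⟨h.right, h.left, h.range_eq.symm, fun z => (h.agree z).symm⟩

/-- Disjoint closed sets in a profinite space are separated by a Boolean-valued locally constant
function. -/
theorem exists_isLocallyConstant_bool_of_disjoint [CompactSpace D] [T2Space D]
    [TotallyDisconnectedSpace D] {K : Bool → Set D} (hK : ∀ c, IsClosed (K c))
    (hd : Disjoint (K true) (K false)) :
    ∃ q : D → Bool, IsLocallyConstant q ∧ ∀ c, ∀ x ∈ K c, q x = c := by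
  classical
  obtain ⟨Q, hQ, hKQ, hQK⟩ := exists_clopen_of_closed_subset_open (hK true)
    (hK false).isOpen_compl (subset_compl_iff_disjoint_right.2 hd)
  refine ⟨fun x => decide (x ∈ Q), ?_, ?_⟩
  · exact (IsLocallyConstant.iff_continuous _).2 ((continuous_bool_rng true).2 (by
      convert hQ using 1
      ext x
      simp))
  · rintro (_ | _) x hx
    · simpa using fun h => hQK h hx
    · simpa using hKQ hx

/-- A Boolean refinement of the left labelling over a single label can be mirrored on the right. -/
theorem MatchedLabels.exists_refinement_on_fiber [TopologicalSpace Z] [CompactSpace Z]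
    [CompactSpace D'] [T2Space D'] [TotallyDisconnectedSpace D'] [∀ x : D', NeBot (𝓝[≠] x)]
    {i : Z → D} {j : Z → D'} (hi : Continuous i) (hj : Continuous j)
    (hj_inj : Function.Injective j) (hj_int : interior (range j) = ∅)
    {a : D → S} {b : D' → S} (h : MatchedLabels i j a b)
    {p : D → Bool} (hp : IsLocallyConstant p) (s : S) :
    ∃ q : D' → Bool, IsLocallyConstant q ∧ (∀ z, a (i z) = s → p (i z) = q (j z)) ∧
      ∀ c, (∃ x, a x = s ∧ p x = c) ↔ ∃ y, b y = s ∧ q y = c := by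
  have hrange : (∃ x, a x = s) ↔ ∃ y, b y = s := by
    simpa using Set.ext_iff.1 h.range_eq s
  by_cases hc : ∃ c, ∀ x, a x = s → p x ≠ c
  · obtain ⟨c, hc⟩ := hc
    have hc' : ∀ x, a x = s → p x = !c := fun x hx => by
      have := hc x hx
      revert this
      cases p x <;> cases c <;> simp
    refine ⟨fun _ => !c, IsLocallyConstant.const _, fun z hz => hc' _ hz, fun d => ?_⟩
    constructor
    · rintro ⟨x, hx, rfl⟩
      obtain ⟨y, hy⟩ := hrange.1 ⟨x, hx⟩
      exact ⟨y, hy, (hc' x hx).symm⟩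
    · rintro ⟨y, hy, rfl⟩
      obtain ⟨x, hx⟩ := hrange.2 ⟨y, hy⟩
      exact ⟨x, hx, hc' x hx⟩
  · push Not at hc
    set V : Set D' := {y | b y = s} \ range j with hV
    have hVo : IsOpen V := (h.right.isOpen_fiber s).sdiff (isCompact_range hj).isClosed
    have hVne : V.Nonempty := by
      obtain ⟨x, hx, -⟩ := hc true
      obtain ⟨y, hy⟩ := hrange.1 ⟨x, hx⟩
      by_contra hne
      rw [Set.not_nonempty_iff_eq_empty, hV, Set.sdiff_eq_empty] at hne
      have : y ∈ interior (range j) := interior_maximal hne (h.right.isOpen_fiber s) hy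
      simp [hj_int] at this
    obtain ⟨y₀, hy₀⟩ := hVne
    obtain ⟨u, hu, v, hv, huv⟩ := (infinite_of_mem_nhds y₀ (hVo.mem_nhds hy₀)).nontrivial
    let w : Bool → D' := fun c => bif c then u else v
    have hw : ∀ c, w c ∈ V := by rintro (_ | _) <;> assumption
    let K : Bool → Set D' := fun c => insert (w c) (j '' {z | a (i z) = s ∧ p (i z) = c})
    have hK : ∀ c, IsClosed (K c) := fun c => by
      have h₁ : IsClosed {z | a (i z) = s ∧ p (i z) = c} :=
        ((h.left.comp_continuous hi).isClosed_fiber s).inter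
          ((hp.comp_continuous hi).isClosed_fiber c)
      exact ((h₁.isCompact.image hj).insert _).isClosed
    have hd : Disjoint (K true) (K false) := by
      rw [Set.disjoint_left]
      rintro y (rfl | ⟨z, hz, rfl⟩) (hy | ⟨z', hz', hy⟩)
      · exact huv hy
      · exact (hw true).2 ⟨z', hy⟩
      · exact (hw false).2 ⟨z, hy⟩
      · obtain rfl := hj_inj hy
        simpa [hz.2] using hz'.2
    obtain ⟨q, hq, hqK⟩ := exists_isLocallyConstant_bool_of_disjoint hK hd
    refine ⟨q, hq, fun z hz => (hqK _ _ (Or.inr ⟨z, ⟨hz, rfl⟩, rfl⟩)).symm, fun c => ?_⟩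
    exact iff_of_true (hc c) ⟨w c, (hw c).1, hqK _ _ (Or.inl rfl)⟩

/-- A Boolean refinement of the left labelling can be mirrored on the right. -/
theorem MatchedLabels.exists_refinement [TopologicalSpace Z] [CompactSpace Z]
    [CompactSpace D'] [T2Space D'] [TotallyDisconnectedSpace D'] [∀ x : D', NeBot (𝓝[≠] x)]
    {i : Z → D} {j : Z → D'} (hi : Continuous i) (hj : Continuous j)
    (hj_inj : Function.Injective j) (hj_int : interior (range j) = ∅)
    {a : D → List Bool} {b : D' → List Bool} (h : MatchedLabels i j a b)
    {p : D → Bool} (hp : IsLocallyConstant p) :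
    ∃ q : D' → Bool, MatchedLabels i j (fun x => p x :: a x) (fun y => q y :: b y) := by
  choose q hq hqz hqr using h.exists_refinement_on_fiber hi hj hj_inj hj_int hp
  have hlc : IsLocallyConstant fun y => q (b y) y := by
    rw [IsLocallyConstant.iff_eventually_eq]
    intro y
    filter_upwards [h.right.eventually_eq y, (hq (b y)).eventually_eq y] with y' h₁ h₂
    rw [h₁, h₂]
  refine ⟨fun y => q (b y) y, hp.comp₂ h.left List.cons, hlc.comp₂ h.right List.cons, ?_, ?_⟩
  · ext l
    constructor
    · rintro ⟨x, rfl⟩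
      obtain ⟨y, hy, hy'⟩ := (hqr (a x) (p x)).1 ⟨x, rfl, rfl⟩
      exact ⟨y, by simp [hy, hy']⟩
    · rintro ⟨y, rfl⟩
      obtain ⟨x, hx, hx'⟩ := (hqr (b y) (q (b y) y)).2 ⟨y, rfl, rfl⟩
      exact ⟨x, by simp [hx, hx']⟩
  · intro z
    simp only [hqz _ z rfl, h.agree z]

/-- In a second countable profinite space, some sequence of Boolean-valued locally constant
functions lists all of them. -/
theorem exists_enum_isLocallyConstant_bool [CompactSpace D] [T2Space D]
    [TotallyDisconnectedSpace D] [SecondCountableTopology D] :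
    ∃ p : ℕ → D → Bool, (∀ n, IsLocallyConstant (p n)) ∧
      ∀ U : Set D, IsClopen U → ∃ n, ∀ x, p n x = true ↔ x ∈ U := by
  classical
  have : Countable (TopologicalSpace.Clopens D) :=
    TopologicalSpace.Clopens.countable_iff_secondCountable.2 inferInstance
  obtain ⟨e, he⟩ := exists_surjective_nat (TopologicalSpace.Clopens D)
  refine ⟨fun n x => decide (x ∈ e n), fun n => ?_, fun U hU => ?_⟩
  · exact (IsLocallyConstant.iff_continuous _).2 ((continuous_bool_rng true).2 (by
      convert (e n).isClopen using 1
      ext x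
      simp))
  · obtain ⟨n, hn⟩ := he ⟨U, hU⟩
    exact ⟨n, fun x => by simp [hn]⟩

/-- If a decreasing sequence of matchings determines the points of `D'` through all its clopen
sets, it induces a continuous map compatible with every matching. -/
theorem exists_continuous_of_matchedLabels [CompactSpace D'] [T2Space D']
    [TotallyDisconnectedSpace D'] {i : Z → D} {j : Z → D'}
    {a : ℕ → D → List Bool} {b : ℕ → D' → List Bool}
    (h : ∀ n, MatchedLabels i j (a n) (b n))
    (hanti : ∀ n x y, a (n + 1) x = b (n + 1) y → a n x = b n y)
    (hsep : ∀ U : Set D', IsClopen U → ∃ n, ∀ y y', b n y = b n y' → y ∈ U → y' ∈ U) :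
    ∃ f : D → D', Continuous f ∧ ∀ n x, a n x = b n (f x) := by
  have hex : ∀ x, ∃ y, ∀ n, a n x = b n y := fun x => by
    obtain ⟨y, hy⟩ := IsCompact.nonempty_iInter_of_sequence_nonempty_isCompact_isClosed
      (fun n => {y | b n y = a n x}) (fun n y hy => (hanti n x y hy.symm).symm)
      (fun n => (h n).range_eq.subset ⟨x, rfl⟩)
      ((h 0).right.isClosed_fiber _).isCompact (fun n => (h n).right.isClosed_fiber _)
    exact ⟨y, fun n => (mem_iInter.1 hy n).symm⟩
  choose f hf using hex
  refine ⟨f, isTopologicalBasis_isClopen.continuous_iff.2 fun U hU => ?_, fun n x => hf x n⟩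
  obtain ⟨n, hn⟩ := hsep U hU
  refine isOpen_iff_mem_nhds.2 fun x hx => ?_
  filter_upwards [(h n).left.eventually_eq x] with x' hx'
  exact hn (f x) (f x') (by rw [← hf, ← hf, hx']) hx

/-- In a compact totally disconnected Hausdorff space, points are determined by any sequence of
labellings which detects all clopen sets. -/
theorem eq_of_labels_eq [CompactSpace D] [T2Space D] [TotallyDisconnectedSpace D]
    {a : ℕ → D → S}
    (hsep : ∀ U : Set D, IsClopen U → ∃ n, ∀ y y', a n y = a n y' → y ∈ U → y' ∈ U)
    {x y : D} (hxy : ∀ n, a n x = a n y) : x = y := by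
  by_contra hne
  obtain ⟨U, hU, hxU, hyU⟩ := exists_isClopen_of_totally_separated hne
  obtain ⟨n, hn⟩ := hsep U hU
  exact hyU (hn x y (hxy n) hxU)

/-- **Knaster–Reichbach**: homeomorphisms between nowhere dense compact subsets of Cantor spaces
extend to homeomorphisms of the Cantor spaces. -/
theorem IsCantorSpace.exists_homeomorph_extending [TopologicalSpace Z] [CompactSpace Z]
    (hD : IsCantorSpace D) (hD' : IsCantorSpace D') {i : Z → D} {j : Z → D'}
    (hi : Continuous i) (hj : Continuous j)
    (hi_inj : Function.Injective i) (hj_inj : Function.Injective j)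
    (hi_int : interior (range i) = ∅) (hj_int : interior (range j) = ∅) :
    ∃ f : D ≃ₜ D', ∀ z, f (i z) = j z := by
  obtain ⟨_, _, _, _, _⟩ := hD
  obtain ⟨_, _, _, _, _⟩ := hD'
  let _ := TopologicalSpace.metrizableSpaceMetric D
  let _ := TopologicalSpace.metrizableSpaceMetric D'
  obtain ⟨p, hp, hpU⟩ := exists_enum_isLocallyConstant_bool (D := D)
  obtain ⟨q, hq, hqU⟩ := exists_enum_isLocallyConstant_bool (D := D')
  let State := {s : (D → List Bool) × (D' → List Bool) // MatchedLabels i j s.1 s.2}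
  have step : ∀ (n : ℕ) (s : State), ∃ t : State,
      ∃ (p' : D → Bool) (q' : D' → Bool),
        t.1.1 = (fun x => p' x :: p n x :: s.1.1 x) ∧
        t.1.2 = (fun y => q n y :: q' y :: s.1.2 y) := by
    rintro n ⟨⟨a, b⟩, hs⟩
    obtain ⟨q', h₁⟩ := hs.exists_refinement hi hj hj_inj hj_int (hp n)
    obtain ⟨p', h₂⟩ := h₁.symm.exists_refinement hj hi hi_inj hi_int (hq n)
    exact ⟨⟨(_, _), h₂.symm⟩, p', q', rfl, rfl⟩
  choose next p' q' hnext₁ hnext₂ using step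
  have start : MatchedLabels i j (fun _ => ([] : List Bool)) (fun _ => []) :=
    ⟨IsLocallyConstant.const _, IsLocallyConstant.const _, by simp, fun _ => rfl⟩
  let s : ℕ → State := fun n => Nat.rec ⟨(_, _), start⟩ next n
  have hs₁ : ∀ n x, (s (n + 1)).1.1 x = p' n (s n) x :: p n x :: (s n).1.1 x :=
    fun n x => congrFun (hnext₁ n (s n)) x
  have hs₂ : ∀ n y, (s (n + 1)).1.2 y = q n y :: q' n (s n) y :: (s n).1.2 y :=
    fun n y => congrFun (hnext₂ n (s n)) y
  have hanti : ∀ n x y, (s (n + 1)).1.1 x = (s (n + 1)).1.2 y → (s n).1.1 x = (s n).1.2 y := by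
    intro n x y hxy
    rw [hs₁, hs₂] at hxy
    simp_all
  have hsep : ∀ U : Set D, IsClopen U →
      ∃ n, ∀ y y', (s n).1.1 y = (s n).1.1 y' → y ∈ U → y' ∈ U := by
    intro U hU
    obtain ⟨n, hn⟩ := hpU U hU
    refine ⟨n + 1, fun y y' hyy' => ?_⟩
    rw [hs₁, hs₁] at hyy'
    rw [← hn, ← hn]
    simp_all
  have hsep' : ∀ U : Set D', IsClopen U →
      ∃ n, ∀ y y', (s n).1.2 y = (s n).1.2 y' → y ∈ U → y' ∈ U := by
    intro U hU
    obtain ⟨n, hn⟩ := hqU U hU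
    refine ⟨n + 1, fun y y' hyy' => ?_⟩
    rw [hs₂, hs₂] at hyy'
    rw [← hn, ← hn]
    simp_all
  obtain ⟨f, hf, hfs⟩ := exists_continuous_of_matchedLabels (fun n => (s n).2) hanti hsep'
  obtain ⟨g, hg, hgs⟩ := exists_continuous_of_matchedLabels (fun n => (s n).2.symm)
    (fun n x y hxy => (hanti n y x hxy.symm).symm) hsep
  refine ⟨⟨⟨f, g, fun x => ?_, fun y => ?_⟩, hf, hg⟩, fun z => ?_⟩
  · exact eq_of_labels_eq hsep fun n => by rw [← hgs, ← hfs]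
  · exact eq_of_labels_eq hsep' fun n => by rw [← hfs, ← hgs]
  · exact eq_of_labels_eq hsep' fun n => by
      rw [← (s n).2.agree z]
      exact (hfs n (i z)).symm

end BackAndForth

section DirectLimit

variable {X X' : Type*} [TopologicalSpace X] [TopologicalSpace X']
  {Xn : ℕ → Set X} {Xn' : ℕ → Set X'}

theorem IsOmegaCantor.interior_range_inclusion (h : IsOmegaCantor X Xn) (n : ℕ) :
    interior (range (inclusion (h.1 n.le_succ))) = ∅ := by
  rw [range_inclusion]
  exact h.2.2.2.2.2 n

/-- Exhaustions of ω-Cantor spaces are linked by a compatible sequence of homeomorphisms. -/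
theorem IsOmegaCantor.exists_compatible_homeomorph (h : IsOmegaCantor X Xn)
    (h' : IsOmegaCantor X' Xn') :
    ∃ f : ∀ n, Xn n ≃ₜ Xn' n, ∀ n (x : Xn n),
      (f (n + 1) (inclusion (h.1 n.le_succ) x) : X') = f n x := by
  obtain ⟨f₀, -⟩ := (h.2.2.2.1 0).exists_homeomorph_extending (h'.2.2.2.1 0)
    (i := Empty.elim) (j := Empty.elim) continuous_of_discreteTopology
    continuous_of_discreteTopology (fun x => x.elim) (fun x => x.elim)
    (by rw [range_eq_empty, interior_empty]) (by rw [range_eq_empty, interior_empty])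
  have step : ∀ (n : ℕ) (f : Xn n ≃ₜ Xn' n), ∃ g : Xn (n + 1) ≃ₜ Xn' (n + 1),
      ∀ x : Xn n, (g (inclusion (h.1 n.le_succ) x) : X') = f x := by
    intro n f
    have : CompactSpace (Xn n) := (h.2.2.2.1 n).2.1
    obtain ⟨g, hg⟩ := (h.2.2.2.1 (n + 1)).exists_homeomorph_extending (h'.2.2.2.1 (n + 1))
      (i := inclusion (h.1 n.le_succ)) (j := inclusion (h'.1 n.le_succ) ∘ f)
      (continuous_inclusion _) ((continuous_inclusion _).comp f.continuous)
      (inclusion_injective _) ((inclusion_injective _).comp f.injective)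
      (h.interior_range_inclusion n)
      (by rw [f.surjective.range_comp]; exact h'.interior_range_inclusion n)
    exact ⟨g, fun x => by rw [hg]; rfl⟩
  choose next hnext using step
  exact ⟨fun n => Nat.rec f₀ next n, fun n x => hnext n _ x⟩

/-- Compatible continuous maps on the pieces of an ω-Cantor space glue to a continuous map. -/
theorem IsOmegaCantor.exists_continuous_gluing (h : IsOmegaCantor X Xn)
    (f : ∀ n, Xn n → Xn' n) (hf : ∀ n, Continuous (f n))
    (hcompat : ∀ n (x : Xn n), (f (n + 1) (inclusion (h.1 n.le_succ) x) : X') = f n x) :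
    ∃ F : X → X', Continuous F ∧ ∀ n (x : Xn n), F x = f n x := by
  have hmono := h.1
  have hle : ∀ m n (hmn : m ≤ n) (x : Xn m), (f n (inclusion (hmono hmn) x) : X') = f m x := by
    intro m n hmn x
    induction n, hmn using Nat.le_induction with
    | base => rfl
    | succ n hmn ih => rw [← ih, ← hcompat n]
  have hmem : ∀ x, ∃ n, x ∈ Xn n := fun x => mem_iUnion.1 (h.2.1 ▸ mem_univ x)
  choose N hN using hmem
  have hF : ∀ n (x : Xn n), (f (N x) ⟨x, hN x⟩ : X') = f n x := by
    intro n x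
    rw [← hle _ _ (le_max_left (N x) n), ← hle _ _ (le_max_right (N x) n)]
  refine ⟨fun x => f (N x) ⟨x, hN x⟩, ⟨fun U hU => (h.2.2.1 _).2 fun n => ?_⟩, hF⟩
  convert hU.preimage (continuous_subtype_val.comp (hf n)) using 1
  ext x
  simp [hF n x]

end DirectLimit

theorem stmt2 {X X' : Type*} [TopologicalSpace X] [TopologicalSpace X']
    (Xn : ℕ → Set X) (Xn' : ℕ → Set X')
    (h : IsOmegaCantor X Xn) (h' : IsOmegaCantor X' Xn') :
    Nonempty (X ≃ₜ X') := by
  obtain ⟨f, hf⟩ := h.exists_compatible_homeomorph h'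
  have hsymm : ∀ n (y : Xn' n),
      ((f (n + 1)).symm (inclusion (h'.1 n.le_succ) y) : X) = (f n).symm y := by
    intro n y
    have hy : inclusion (h'.1 n.le_succ) y =
        f (n + 1) (inclusion (h.1 n.le_succ) ((f n).symm y)) :=
      Subtype.ext (by rw [hf, Homeomorph.apply_symm_apply])
    rw [hy, Homeomorph.symm_apply_apply]
  obtain ⟨F, hF, hFn⟩ := h.exists_continuous_gluing (fun n => f n) (fun n => (f n).continuous) hf
  obtain ⟨G, hG, hGn⟩ := h'.exists_continuous_gluing (fun n => (f n).symm)
    (fun n => (f n).symm.continuous) hsymm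
  refine ⟨⟨⟨F, G, fun x => ?_, fun y => ?_⟩, hF, hG⟩⟩
  · obtain ⟨n, hn⟩ := mem_iUnion.1 (h.2.1 ▸ mem_univ x)
    rw [hFn n ⟨x, hn⟩, hGn n, Homeomorph.symm_apply_apply]
  · obtain ⟨n, hn⟩ := mem_iUnion.1 (h'.2.1 ▸ mem_univ y)
    rw [hGn n ⟨y, hn⟩, hFn n, Homeomorph.apply_symm_apply]
end

section
/- Let X be a topological space and let K₁ ⊆ K₂ ⊆ ⋯ be an increasing sequence of subsets of X with X = ⋃ₙ Kₙ, such that X carries the direct limit topology (a set U ⊆ X is open if and only if U ∩ Kₙ is open in the subspace topology of Kₙ for every n). If each Kₙ, with the subspace topology, is compact, metrizable, and totally disconnected, then X is totally disconnected; moreover, any two distinct points of X are separated by a set that is clopen in X. -/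
open Set Filter Topology

/-- The trace on `L` of a set is clopen only if so is its trace on any smaller `K`. -/
lemma IsClopen.preimage_val_mono {X : Type*} [TopologicalSpace X] {K L A : Set X} (hKL : K ⊆ L)
    (hA : IsClopen (Subtype.val ⁻¹' A : Set L)) : IsClopen (Subtype.val ⁻¹' A : Set K) :=
  hA.preimage (continuous_inclusion hKL)

/-- A clopen subset of a compact subspace `K` extends to a clopen subset of any larger
profinite subspace `L`. -/
lemma exists_isClopen_extension {X : Type*} [TopologicalSpace X] {K L A : Set X} (hKL : K ⊆ L)
    [CompactSpace K] [CompactSpace L] [T2Space L] [TotallyDisconnectedSpace L]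
    (hA : IsClopen (Subtype.val ⁻¹' A : Set K)) :
    ∃ B : Set X, IsClopen (Subtype.val ⁻¹' B : Set L) ∧ ∀ z ∈ K, (z ∈ B ↔ z ∈ A) := by
  have hi := continuous_inclusion hKL
  have hclosed : IsClosed (inclusion hKL '' (Subtype.val ⁻¹' A)) :=
    (hA.isClosed.isCompact.image hi).isClosed
  have hclosed' : IsClosed (inclusion hKL '' (Subtype.val ⁻¹' A)ᶜ) :=
    (hA.compl.isClosed.isCompact.image hi).isClosed
  have hdisj : inclusion hKL '' (Subtype.val ⁻¹' A) ⊆ (inclusion hKL '' (Subtype.val ⁻¹' A)ᶜ)ᶜ :=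
    (disjoint_image_of_injective (inclusion_injective hKL) disjoint_compl_right).subset_compl_right
  obtain ⟨C, hC, hAC, hCA⟩ :=
    exists_clopen_of_closed_subset_open hclosed hclosed'.isOpen_compl hdisj
  refine ⟨Subtype.val '' C, by rwa [preimage_image_eq _ Subtype.val_injective], fun z hz => ?_⟩
  constructor
  · rintro ⟨w, hw, rfl⟩
    by_contra hwA
    exact hCA hw ⟨⟨w, hz⟩, hwA, rfl⟩
  · intro hzA
    exact ⟨_, hAC ⟨⟨z, hz⟩, hzA, rfl⟩, rfl⟩

/-- In the direct limit of an increasing sequence of profinite subspaces, every clopen subset of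
a term of the sequence extends to a clopen subset of the whole space. -/
lemma exists_isClopen_of_isClopen_term {X : Type*} [TopologicalSpace X]
    {K : ℕ → Set X} (hmono : Monotone K)
    (htop : ∀ U : Set X, IsOpen U ↔ ∀ n, IsOpen (Subtype.val ⁻¹' U : Set (K n)))
    [∀ n, CompactSpace (K n)] [∀ n, T2Space (K n)] [∀ n, TotallyDisconnectedSpace (K n)]
    {N : ℕ} {A : Set X} (hA : IsClopen (Subtype.val ⁻¹' A : Set (K N))) :
    ∃ U : Set X, IsClopen U ∧ ∀ z ∈ K N, (z ∈ U ↔ z ∈ A) := by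
  choose! next hnext hnext_iff using fun (k : ℕ) (B : Set X)
    (hB : IsClopen (Subtype.val ⁻¹' B : Set (K (N + k)))) =>
    exists_isClopen_extension (hmono (Nat.le_succ (N + k))) hB
  let S : ℕ → Set X := fun k => Nat.rec A next k
  have hS : ∀ k, IsClopen (Subtype.val ⁻¹' S k : Set (K (N + k))) := fun k => by
    induction k with
    | zero => exact hA
    | succ k ih => exact hnext k _ ih
  have hagree : ∀ {j k}, j ≤ k → ∀ z ∈ K (N + j), (z ∈ S k ↔ z ∈ S j) := fun {j k} hjk z hz => by
    induction k, hjk using Nat.le_induction with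
    | base => rfl
    | succ k hjk ih =>
      exact (hnext_iff k _ (hS k) z (hmono (Nat.add_le_add_left hjk N) hz)).trans ih
  let U : Set X := {z | ∃ k, z ∈ K (N + k) ∧ z ∈ S k}
  have hU : ∀ k, ∀ z ∈ K (N + k), (z ∈ U ↔ z ∈ S k) := by
    refine fun k z hz => ⟨?_, fun h => ⟨k, hz, h⟩⟩
    rintro ⟨j, hzj, hj⟩
    rcases le_total j k with h | h
    · exact (hagree h z hzj).2 hj
    · exact (hagree h z hz).1 hj
  have hUclopen : ∀ n, IsClopen (Subtype.val ⁻¹' U : Set (K n)) := fun n => by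
    refine IsClopen.preimage_val_mono (hmono (Nat.le_add_left n N)) ?_
    convert hS n using 1
    ext z
    exact hU n z z.2
  refine ⟨U, ⟨⟨(htop _).2 fun n => (hUclopen n).compl.isOpen⟩,
    (htop _).2 fun n => (hUclopen n).isOpen⟩, hU 0⟩

theorem stmt4 {X : Type*} [TopologicalSpace X]
    (K : ℕ → Set X) (hmono : Monotone K) (hunion : (⋃ n, K n) = Set.univ)
    (htop : ∀ U : Set X, IsOpen U ↔ ∀ n, IsOpen (Subtype.val ⁻¹' U : Set ↥(K n)))
    (hcompact : ∀ n, CompactSpace ↥(K n))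
    (hmetr : ∀ n, TopologicalSpace.MetrizableSpace ↥(K n))
    (htd : ∀ n, TotallyDisconnectedSpace ↥(K n)) :
    TotallyDisconnectedSpace X ∧
      ∀ x y : X, x ≠ y → ∃ A : Set X, IsClopen A ∧ x ∈ A ∧ y ∉ A := by
  have hsep : ∀ x y : X, x ≠ y → ∃ A : Set X, IsClopen A ∧ x ∈ A ∧ y ∉ A := by
    intro x y hxy
    obtain ⟨m, hm⟩ := mem_iUnion.1 (hunion ▸ mem_univ x)
    obtain ⟨n, hn⟩ := mem_iUnion.1 (hunion ▸ mem_univ y)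
    have hx : x ∈ K (max m n) := hmono (le_max_left m n) hm
    have hy : y ∈ K (max m n) := hmono (le_max_right m n) hn
    obtain ⟨C, hC, hxC, hyC⟩ := exists_isClopen_of_totally_separated
      (show (⟨x, hx⟩ : K (max m n)) ≠ ⟨y, hy⟩ from fun h => hxy (congrArg Subtype.val h))
    obtain ⟨U, hU, hUC⟩ := exists_isClopen_of_isClopen_term hmono htop (A := Subtype.val '' C)
      (by rwa [preimage_image_eq _ Subtype.val_injective])
    refine ⟨U, hU, (hUC x hx).2 ⟨_, hxC, rfl⟩, fun hyU => ?_⟩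
    obtain ⟨w, hw, rfl⟩ := (hUC y hy).1 hyU
    exact hyC hw
  have : TotallySeparatedSpace X := totallySeparatedSpace_iff_exists_isClopen.2 fun x y hxy => by
    simpa using hsep x y hxy
  exact ⟨inferInstance, hsep⟩
end

section
/- Let Z be a metric space, let γ : I → Z be a geodesic (an isometric embedding of a real interval I), let f : (0,∞) → (0,∞), let K ≥ 1 and C ≥ 0 be real numbers, and let R > 0 satisfy f(R) ≥ K² + K. Suppose that every continuous path β : [c,d] → Z whose endpoints β(c), β(d) lie at distance at most R from the image of γ and whose interior points β(t), for t ∈ (c,d), lie at distance at least R from the image of γ, satisfies ℓ(β) ≥ f(R)·d(β(c), β(d)) − f(R). Then every (K,C)-quasi-geodesic path α : [a,b] → Z with α(a) and α(b) on the image of γ is contained in the closed (R + D)-neighborhood of the image of γ, where D = K·C·f(R) + K·f(R) + K·C + C. -/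
open Set Metric Filter Topology ENNReal

/-- The length (total variation) of a path `α` over the interval `[a, b]`. -/
noncomputable def pathLength {Z : Type*} [MetricSpace Z] (α : ℝ → Z) (a b : ℝ) : ℝ≥0∞ :=
  eVariationOn α (Set.Icc a b)

/-- `α` is a `(K, C)`-quasi-geodesic path on `[a, b]`: it is continuous and for all
`a ≤ t ≤ u ≤ b`, the length of `α` over `[t, u]` is at most `K (u - t) + C` and
`d(α(t), α(u)) ≥ (u - t)/K - C`. -/
def IsQuasiGeodesicOn {Z : Type*} [MetricSpace Z] (K C : ℝ) (α : ℝ → Z) (a b : ℝ) : Prop :=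
  ContinuousOn α (Set.Icc a b) ∧
  ∀ t u : ℝ, a ≤ t → t ≤ u → u ≤ b →
    pathLength α t u ≤ ENNReal.ofReal (K * (u - t) + C) ∧
    (u - t) / K - C ≤ dist (α t) (α u)

/-- `γ` is a geodesic on the interval `I`: `I` is a real interval (order-connected set) and
`γ` is an isometric embedding of `I`. -/
def IsGeodesicOn {Z : Type*} [MetricSpace Z] (γ : ℝ → Z) (I : Set ℝ) : Prop :=
  I.OrdConnected ∧ ∀ t ∈ I, ∀ u ∈ I, dist (γ t) (γ u) = |t - u|

/-- A continuous function on `[a, t]` that starts at or below `R` has a last time at which it is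
at or below `R`. -/
lemma exists_last_le {g : ℝ → ℝ} {a t R : ℝ} (hat : a ≤ t) (hg : ContinuousOn g (Icc a t))
    (ha : g a ≤ R) : ∃ c ∈ Icc a t, g c ≤ R ∧ ∀ s ∈ Ioc c t, R < g s := by
  have hclosed : IsClosed (Icc a t ∩ g ⁻¹' Iic R) :=
    hg.preimage_isClosed_of_isClosed isClosed_Icc isClosed_Iic
  obtain ⟨c, ⟨hc, hgc⟩, hmax⟩ := (isCompact_Icc.of_isClosed_subset hclosed
    inter_subset_left).exists_isGreatest ⟨a, left_mem_Icc.2 hat, ha⟩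
  refine ⟨c, hc, hgc, fun s hs => ?_⟩
  by_contra! h
  exact absurd (hmax ⟨⟨hc.1.trans hs.1.le, hs.2⟩, h⟩) (not_le.2 hs.1)

/-- A continuous function on `[t, b]` that ends at or below `R` has a first time at which it is
at or below `R`. -/
lemma exists_first_le {g : ℝ → ℝ} {t b R : ℝ} (htb : t ≤ b) (hg : ContinuousOn g (Icc t b))
    (hb : g b ≤ R) : ∃ d ∈ Icc t b, g d ≤ R ∧ ∀ s ∈ Ico t d, R < g s := by
  have hclosed : IsClosed (Icc t b ∩ g ⁻¹' Iic R) :=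
    hg.preimage_isClosed_of_isClosed isClosed_Icc isClosed_Iic
  obtain ⟨d, ⟨hd, hgd⟩, hmin⟩ := (isCompact_Icc.of_isClosed_subset hclosed
    inter_subset_left).exists_isLeast ⟨b, right_mem_Icc.2 htb, hb⟩
  refine ⟨d, hd, hgd, fun s hs => ?_⟩
  by_contra! h
  exact absurd (hmin ⟨⟨hs.1, hs.2.le.trans hd.2⟩, h⟩) (not_le.2 hs.2)

/-- If `F ≥ K² + K`, the two bounds on a detour of duration `x` and endpoint distance `δ`
bound `x`. -/
lemma detour_duration_le {K C F x δ : ℝ} (hK : 1 ≤ K) (hF : K ^ 2 + K ≤ F) (hx : 0 ≤ x)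
    (hδ : x / K - C ≤ δ) (hlen : F * δ - F ≤ K * x + C) : x ≤ F * C + F + C := by
  have hK0 : 0 < K := by linarith
  have hF0 : 0 ≤ F := by nlinarith
  have hmul : F * (x / K - C) ≤ F * δ := mul_le_mul_of_nonneg_left hδ hF0
  have hcoef : (K ^ 2 + K) * (x / K) ≤ F * (x / K) :=
    mul_le_mul_of_nonneg_right hF (div_nonneg hx hK0.le)
  have hsimp : (K ^ 2 + K) * (x / K) = K * x + x := by field_simp
  linarith

theorem stmt10 {Z : Type*} [MetricSpace Z] (γ : ℝ → Z) (I : Set ℝ)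
    (hγ : IsGeodesicOn γ I) (f : ℝ → ℝ) (K C R : ℝ)
    (hK : 1 ≤ K) (hC : 0 ≤ C) (hR : 0 < R) (hfR : K ^ 2 + K ≤ f R)
    (hdetour : ∀ (c d : ℝ) (β : ℝ → Z), c ≤ d → ContinuousOn β (Set.Icc c d) →
      Metric.infDist (β c) (γ '' I) ≤ R → Metric.infDist (β d) (γ '' I) ≤ R →
      (∀ t ∈ Set.Ioo c d, R ≤ Metric.infDist (β t) (γ '' I)) →
      ENNReal.ofReal (f R * dist (β c) (β d) - f R) ≤ pathLength β c d) :
    ∀ (a b : ℝ) (α : ℝ → Z), a ≤ b → IsQuasiGeodesicOn K C α a b →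
      α a ∈ γ '' I → α b ∈ γ '' I →
      ∀ t ∈ Set.Icc a b,
        Metric.infDist (α t) (γ '' I) ≤ R + (K * C * f R + K * f R + K * C + C) := by
  intro a b α _ ⟨hcont, hqg⟩ ha hb t ht
  have hg : ContinuousOn (fun s => infDist (α s) (γ '' I)) (Icc a b) :=
    (continuous_infDist_pt _).comp_continuousOn hcont
  obtain ⟨c, hc, hgc, hc'⟩ := exists_last_le (R := R) ht.1
    (hg.mono (Icc_subset_Icc_right ht.2)) (by simpa [infDist_zero_of_mem ha] using hR.le)
  obtain ⟨d, hd, hgd, hd'⟩ := exists_first_le (R := R) ht.2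
    (hg.mono (Icc_subset_Icc_left ht.1)) (by simpa [infDist_zero_of_mem hb] using hR.le)
  have hcd : c ≤ d := hc.2.trans hd.1
  obtain ⟨hlen, hdist⟩ := hqg c d hc.1 hcd hd.2
  have hdet := hdetour c d α hcd (hcont.mono (Icc_subset_Icc hc.1 hd.2)) hgc hgd fun s hs =>
    (le_total s t).elim (fun h => (hc' s ⟨hs.1, h⟩).le) (fun h => (hd' s ⟨h, hs.2⟩).le)
  have hnonneg : 0 ≤ K * (d - c) + C := by nlinarith
  have hdur : d - c ≤ f R * C + f R + C :=
    detour_duration_le hK hfR (sub_nonneg.2 hcd) hdist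
      ((ENNReal.ofReal_le_ofReal_iff hnonneg).1 (hdet.trans hlen))
  have htc : dist (α t) (α c) ≤ K * (d - c) + C := by
    rw [← ENNReal.ofReal_le_ofReal_iff hnonneg, ← edist_dist]
    exact (eVariationOn.edist_le α (s := Icc c d) ⟨hc.2, hd.1⟩ ⟨le_rfl, hcd⟩).trans hlen
  have hmul : K * (d - c) ≤ K * (f R * C + f R + C) :=
    mul_le_mul_of_nonneg_left hdur (by linarith)
  have htri : infDist (α t) (γ '' I) ≤ infDist (α c) (γ '' I) + dist (α t) (α c) :=
    infDist_le_infDist_add_dist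
  linarith
end
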